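/- For every instance (N,V) of 3D-SR-SAS-BIN there exists a stable matching M in (N,V) such that 2·u(M) ≥ u(M') for every stable matching M' in (N,V); that is, a stable matching whose utilitarian welfare is at least half of the maximum utilitarian welfare over all stable matchings. -/

import Mathlib

open Finset

variable {A : Type*}

/-- `M` is a matching on agent set `N`: a set of pairwise disjoint triples of agents of `N`. -/
def IsMatching [DecidableEq A] (N : Finset A) (M : Finset (Finset A)) : Prop :=
  (∀ t ∈ M, t.card = 3 ∧ t ⊆ N) ∧ ∀ t ∈ M, ∀ s ∈ M, t ≠ s → Disjoint t s

/-- The (additively separable) utility of agent `a` in matching `M` under valuations `val`: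
the sum, over the triples of `M` containing `a`, of the valuations by `a` of the other
members; this is `0` if `a` is unmatched, and for a genuine matching it is the sum of the
valuations of `a`'s two partners. -/
def utility [DecidableEq A] (val : A → A → ℤ) (M : Finset (Finset A)) (a : A) : ℤ :=
  ∑ t ∈ M.filter (fun t => a ∈ t), ∑ b ∈ t.erase a, val a b

/-- The triple consisting of the three distinct agents `x, y, z` of `N` blocks `M`. -/
def Blocks [DecidableEq A] (N : Finset A) (val : A → A → ℤ) (M : Finset (Finset A))
    (x y z : A) : Prop :=
  x ∈ N ∧ y ∈ N ∧ z ∈ N ∧ x ≠ y ∧ x ≠ z ∧ y ≠ z ∧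
  utility val M x < val x y + val x z ∧
  utility val M y < val y x + val y z ∧
  utility val M z < val z x + val z y

/-- `M` is stable: no triple of agents of `N` blocks it. -/
def IsStable [DecidableEq A] (N : Finset A) (val : A → A → ℤ) (M : Finset (Finset A)) : Prop :=
  ∀ x y z : A, ¬ Blocks N val M x y z

/-- Binary symmetric preferences on `N`. -/
def BinSym [DecidableEq A] (N : Finset A) (val : A → A → ℤ) : Prop :=
  (∀ a ∈ N, ∀ b ∈ N, a ≠ b → val a b = 0 ∨ val a b = 1) ∧
  (∀ a ∈ N, ∀ b ∈ N, val a b = val b a)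

/-- A `P`-matching: a matching in which every matched agent has strictly positive utility. -/
def IsPMatching [DecidableEq A] (N : Finset A) (val : A → A → ℤ)
    (M : Finset (Finset A)) : Prop :=
  IsMatching N M ∧ ∀ a : A, (∃ t ∈ M, a ∈ t) → 0 < utility val M a

/-- `x, y, z` form a triangle: three distinct agents of `N` whose pairwise valuations
all equal `1`. -/
def IsTriangle [DecidableEq A] (N : Finset A) (val : A → A → ℤ) (x y z : A) : Prop :=
  x ∈ N ∧ y ∈ N ∧ z ∈ N ∧ x ≠ y ∧ x ≠ z ∧ y ≠ z ∧
  val x y = 1 ∧ val y z = 1 ∧ val x z = 1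

/-- The instance contains no triangle. -/
def TriangleFree [DecidableEq A] (N : Finset A) (val : A → A → ℤ) : Prop :=
  ∀ x y z : A, ¬ IsTriangle N val x y z

/-- `PathTrianglePacking G V C`: the set `V` is partitioned into three-vertex paths and triangles
of `G`, and `C` consists of the midpoints of the paths and all the vertices of the triangles. -/
inductive PathTrianglePacking [DecidableEq A] (G : SimpleGraph A) :
    Finset A → Finset A → Prop
  | empty : PathTrianglePacking G ∅ ∅
  | path {V C : Finset A} (a c b : A) (h : PathTrianglePacking G V C) (hca : G.Adj c a)
      (hcb : G.Adj c b) (hab : a ≠ b) (ha : a ∉ V) (hc : c ∉ V) (hb : b ∉ V) :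
      PathTrianglePacking G ({a, c, b} ∪ V) (insert c C)
  | triangle {V C : Finset A} (a c b : A) (h : PathTrianglePacking G V C) (hca : G.Adj c a)
      (hcb : G.Adj c b) (hab : G.Adj a b) (ha : a ∉ V) (hc : c ∉ V) (hb : b ∉ V) :
      PathTrianglePacking G ({a, c, b} ∪ V) ({a, c, b} ∪ C)

namespace PathTrianglePacking

variable [DecidableEq A] {G : SimpleGraph A}

lemma subset {V C : Finset A} (h : PathTrianglePacking G V C) : C ⊆ V := by
  induction h with
  | empty => simp
  | path a c b h hca hcb hab ha hc hb ih => grind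
  | triangle a c b h hca hcb hab ha hc hb ih => grind

/-- The path through an endpoint can be removed from the packing. -/
lemma exists_remove_path {V C : Finset A} (h : PathTrianglePacking G V C) {y : A} (hy : y ∈ V)
    (hyC : y ∉ C) : ∃ c w V' C', PathTrianglePacking G V' C' ∧ V = {y, c, w} ∪ V' ∧
      C = insert c C' ∧ G.Adj c y ∧ G.Adj c w ∧ y ≠ w ∧ y ∉ V' ∧ c ∉ V' ∧ w ∉ V' := by
  induction h with
  | empty => simp at hy
  | path a c b h hca hcb hab ha hc hb ih =>
    by_cases hya : y = a
    · subst hya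
      exact ⟨c, b, _, _, h, rfl, rfl, hca, hcb, hab, ha, hc, hb⟩
    by_cases hyb : y = b
    · subst hyb
      exact ⟨c, a, _, _, h, by grind, rfl, hcb, hca, hab.symm, hb, hc, ha⟩
    obtain ⟨d, w, V', C', h', hV, hC, hdy, hdw, hyw, hy', hd', hw'⟩ :=
      ih (by grind) (by grind)
    exact ⟨d, w, _, _, h'.path a c b hca hcb hab (by grind) (by grind) (by grind),
      by grind, by grind, hdy, hdw, hyw, by grind, by grind, by grind⟩
  | triangle a c b h hca hcb hab ha hc hb ih =>
    obtain ⟨d, w, V', C', h', hV, hC, hdy, hdw, hyw, hy', hd', hw'⟩ :=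
      ih (by grind) (by grind)
    exact ⟨d, w, _, _, h'.triangle a c b hca hcb hab (by grind) (by grind) (by grind),
      by grind, by grind, hdy, hdw, hyw, by grind, by grind, by grind⟩

end PathTrianglePacking

/-- A packing of paths and triangles inside `N` that no path or triangle of `G` blocks. -/
structure IsStablePacking [DecidableEq A] (G : SimpleGraph A) (N V C : Finset A) : Prop where
  packing : PathTrianglePacking G V C
  subset : V ⊆ N
  path_free : ∀ y ∈ N, y ∉ C → ∀ x ∈ N, x ∉ V → ∀ z ∈ N, z ∉ V → G.Adj y x → G.Adj y z → x = z
  triangle_free : ∀ x ∈ N, x ∉ C → ∀ y ∈ N, y ∉ C → ∀ z ∈ N, z ∉ C →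
    G.Adj x y → G.Adj y z → G.Adj x z → False

lemma SimpleGraph.CliqueFreeOn.no_triangle {G : SimpleGraph A} {N C : Finset A}
    (h : G.CliqueFreeOn N 3) : ∀ x ∈ N, x ∉ C → ∀ y ∈ N, y ∉ C → ∀ z ∈ N, z ∉ C →
      G.Adj x y → G.Adj y z → G.Adj x z → False := by
  classical
  intro x hx _ y hy _ z hz _ hxy hyz hxz
  refine h (t := {x, y, z}) ?_ (SimpleGraph.is3Clique_triple_iff.2 ⟨hxy, hxz, hyz⟩)
  simp [Set.insert_subset_iff, hx, hy, hz]

open Classical in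
/-- In a triangle-free graph, a packing that is stable after the deletion of `v` either can be
repaired, or can be replaced by one, stable after the deletion of another vertex, in which more
midpoints have an uncovered neighbour. -/
lemma IsStablePacking.exists_repair_or_augment [DecidableEq A] {G : SimpleGraph A}
    {N V C : Finset A} {v : A} (hv : v ∈ N) (h : IsStablePacking G (N.erase v) V C)
    (htri : G.CliqueFreeOn N 3) :
    (∃ V' C', IsStablePacking G N V' C') ∨
    ∃ w ∈ N, ∃ V' C', IsStablePacking G (N.erase w) V' C' ∧
      (C.filter fun c => ∃ x ∈ N.erase v, x ∉ V ∧ G.Adj c x).card <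
        (C'.filter fun c => ∃ x ∈ N.erase w, x ∉ V' ∧ G.Adj c x).card := by
  obtain ⟨hP, hVN, hpath, -⟩ := h
  have hCV := hP.subset
  have hvV : v ∉ V := fun h => by simpa using hVN h
  by_cases hA : ∃ p ∈ N.erase v, p ∉ V ∧ G.Adj v p ∧ ∃ q ∈ N.erase v, q ∉ V ∧ G.Adj v q ∧ p ≠ q
  · obtain ⟨p, hp, hpV, hvp, q, hq, hqV, hvq, hpq⟩ := hA
    refine .inl ⟨_, _, hP.path p v q hvp hvq hpq hpV hvV hqV, ?_, ?_, htri.no_triangle⟩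
    · clear hpath
      grind
    · intro y hy hyC x hx hxV z hz hzV
      exact hpath y (by clear hpath; grind) (by clear hpath; grind) x (by clear hpath; grind)
        (by clear hpath; grind) z (by clear hpath; grind) (by clear hpath; grind)
  replace hA : ∀ x ∈ N, x ≠ v → x ∉ V → ∀ z ∈ N, z ≠ v → z ∉ V → G.Adj v x → G.Adj v z →
      x = z := by
    clear hpath
    grind
  have hpath' : ∀ y ∈ N, y ∉ C → ∀ x ∈ N, x ≠ v → x ∉ V → ∀ z ∈ N, z ≠ v → z ∉ V →
      G.Adj y x → G.Adj y z → x = z := by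
    intro y hy hyC x hx hxv hxV z hz hzv hzV
    by_cases hyv : y = v
    · subst hyv
      exact hA x hx hxv hxV z hz hzv hzV
    · exact hpath y (mem_erase.2 ⟨hyv, hy⟩) hyC x (mem_erase.2 ⟨hxv, hx⟩) hxV z
        (mem_erase.2 ⟨hzv, hz⟩) hzV
  clear hpath hA
  by_cases hB : ∃ y ∈ N.erase v, y ∉ V ∧ G.Adj y v ∧ ∃ x ∈ N.erase v, x ∉ V ∧ G.Adj y x
  · obtain ⟨y, hy, hyV, hyv, x, hx, hxV, hyx⟩ := hB
    refine .inl ⟨_, _, hP.path v y x hyv hyx (mem_erase.1 hx).1.symm hvV hyV hxV, ?_, ?_,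
      htri.no_triangle⟩
    · clear hpath'
      grind
    · intro y' hy' hyC' x' hx' hxV' z' hz' hzV'
      simp only [mem_union, mem_insert, mem_singleton, not_or] at hyC' hxV' hzV'
      exact hpath' y' hy' hyC'.2 x' hx' hxV'.1.1 hxV'.2 z' hz' hzV'.1.1 hzV'.2
  by_cases hD : ∃ y ∈ V, y ∉ C ∧ G.Adj y v ∧ ∃ x ∈ N.erase v, x ∉ V ∧ G.Adj y x
  swap
  · have hno : ∀ y ∈ N, y ∉ C → G.Adj y v → ∀ x ∈ N, x ≠ v → x ∉ V → ¬ G.Adj y x := by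
      intro y hy hyC hyv x hx hxv hxV hyx
      by_cases hyV : y ∈ V
      · exact hD ⟨y, hyV, hyC, hyv, x, mem_erase.2 ⟨hxv, hx⟩, hxV, hyx⟩
      · exact hB ⟨y, mem_erase.2 ⟨hyv.ne, hy⟩, hyV, hyv, x, mem_erase.2 ⟨hxv, hx⟩, hxV, hyx⟩
    refine .inl ⟨V, C, hP, hVN.trans (erase_subset _ _), ?_, htri.no_triangle⟩
    intro y hy hyC x hx hxV z hz hzV hyx hyz
    by_cases hxv : x = v
    · subst hxv
      by_contra hxz
      exact hno y hy hyC hyx z hz (Ne.symm hxz) hzV hyz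
    by_cases hzv : z = v
    · subst hzv
      exact (hno y hy hyC hyz x hx hxv hxV hyx).elim
    · exact hpath' y hy hyC x hx hxv hxV z hz hzv hzV hyx hyz
  clear hB
  obtain ⟨y, hyV, hyC, hyv, x, hx, hxV, hyx⟩ := hD
  obtain ⟨c, w, V₁, C₁, hP₁, rfl, rfl, hcy, hcw, hyw, hy₁, hc₁, hw₁⟩ :=
    hP.exists_remove_path hyV hyC
  have hC₁ := hP₁.subset
  have hcN : c ∈ N := (mem_erase.1 (hVN (by simp))).2
  have hyN : y ∈ N := (mem_erase.1 (hVN (by simp))).2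
  have hwN : w ∈ N := (mem_erase.1 (hVN (by simp))).2
  have hxN : x ∈ N := (mem_erase.1 hx).2
  have hV₁N : ∀ z ∈ V₁, z ∈ N := fun z hz => (mem_erase.1 (hVN (mem_union_right _ hz))).2
  have hcx : ¬ G.Adj c x := fun hcx =>
    htri.no_triangle (C := ∅) c hcN (by simp) y hyN (by simp) x hxN (by simp) hcy hyx hcx
  have hyc := hcy.ne'
  have hwc := hcw.ne'
  by_cases hD₁ : ∃ u ∈ N.erase v, u ∉ ({y, c, w} ∪ V₁ : Finset A) ∧ G.Adj c u
  · obtain ⟨u, hu, huV, hcu⟩ := hD₁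
    have hux : u ≠ x := by
      rintro rfl
      exact hcx hcu
    have hP₂ : PathTrianglePacking G ({w, c, u} ∪ ({x, y, v} ∪ V₁)) (insert c (insert y C₁)) := by
      clear hpath'
      exact (hP₁.path x y v hyx hyv (by grind) (by grind) (by grind) (by grind)).path
        w c u hcw hcu (by grind) (by grind) (by grind) (by grind)
    refine .inl ⟨_, _, hP₂, ?_, ?_, htri.no_triangle⟩
    · clear hpath'
      grind
    · intro y' hy' hyC' x' hx' hxV' z' hz' hzV'
      simp only [mem_union, mem_insert, mem_singleton, not_or] at hyC' hxV' hzV'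
      exact hpath' y' hy' (by simp [hyC']) x' hx' (by simp [hxV']) (by simp [hxV'])
        z' hz' (by simp [hzV']) (by simp [hzV'])
  · have hP₂ : PathTrianglePacking G ({v, y, c} ∪ V₁) (insert y C₁) := by
      clear hpath'
      exact hP₁.path v y c hyv hcy.symm (by grind) (by grind) (by grind) (by grind)
    have hfree : ∀ z, (z ∈ N.erase w ∧ z ∉ ({v, y, c} ∪ V₁ : Finset A)) ↔
        (z ∈ N.erase v ∧ z ∉ ({y, c, w} ∪ V₁ : Finset A)) := by
      clear hpath'
      grind
    refine .inr ⟨w, hwN, _, _, ⟨hP₂, ?_, ?_, ?_⟩, card_lt_card ⟨fun d hd => ?_, fun hsub => ?_⟩⟩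
    · clear hpath'
      grind
    · intro y' hy' hyC' x' hx' hxV' z' hz' hzV' hyx' hyz'
      obtain ⟨hx', hxV'⟩ := (hfree x').1 ⟨hx', hxV'⟩
      obtain ⟨hz', hzV'⟩ := (hfree z').1 ⟨hz', hzV'⟩
      rw [mem_erase] at hy'
      rw [mem_insert, not_or] at hyC'
      have hyc' : y' ≠ c := by
        rintro rfl
        exact hD₁ ⟨x', hx', hxV', hyx'⟩
      rw [mem_erase] at hx' hz'
      exact hpath' y' hy'.2 (by simp [hyC', hyc']) x' hx'.2 hx'.1 hxV' z' hz'.2 hz'.1 hzV'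
        hyx' hyz'
    · intro x' hx' hxC' y' hy' hyC' z' hz' hzC'
      exact htri.no_triangle x' (mem_of_mem_erase hx') hxC' y' (mem_of_mem_erase hy') hyC'
        z' (mem_of_mem_erase hz') hzC'
    · obtain ⟨hd, z, hz, hzV, hdz⟩ := mem_filter.1 hd
      obtain ⟨hz', hzV'⟩ := (hfree z).2 ⟨hz, hzV⟩
      obtain rfl | hd := mem_insert.1 hd
      · exact (hD₁ ⟨z, hz, hzV, hdz⟩).elim
      · exact mem_filter.2 ⟨mem_insert_of_mem hd, z, hz', hzV', hdz⟩
    · obtain ⟨hx', hxV'⟩ := (hfree x).2 ⟨hx, hxV⟩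
      exact hyC (mem_filter.1
        (hsub (mem_filter.2 ⟨mem_insert_self _ _, x, hx', hxV', hyx⟩))).1

lemma exists_isStablePacking [DecidableEq A] (G : SimpleGraph A) (N : Finset A) :
    ∃ V C, IsStablePacking G N V C := by
  classical
  induction N using Finset.strongInduction with
  | H N ih =>
  by_cases htri : ∃ x ∈ N, ∃ y ∈ N, ∃ z ∈ N, G.Adj x y ∧ G.Adj y z ∧ G.Adj x z
  · obtain ⟨x, hx, y, hy, z, hz, hxy, hyz, hxz⟩ := htri
    obtain ⟨V, C, hP, hVN, hpath, htri⟩ := ih (N \ {x, y, z})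
      (sdiff_ssubset (by grind) ⟨x, by simp⟩)
    refine ⟨_, _, hP.triangle x y z hxy.symm hyz hxz ?_ ?_ ?_, ?_, ?_, ?_⟩
    · grind
    · grind
    · grind
    · grind
    · intro y' _ _ x' _ _ z' _ _
      exact hpath y' (by grind) (by grind) x' (by grind) (by grind) z' (by grind) (by grind)
    · intro x' _ _ y' _ _ z' _ _
      exact htri x' (by grind) (by grind) y' (by grind) (by grind) z' (by grind) (by grind)
  replace htri : G.CliqueFreeOn N 3 := by
    intro t ht h3
    obtain ⟨x, y, z, hxy, hxz, hyz, rfl⟩ := SimpleGraph.is3Clique_iff.1 h3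
    simp only [coe_insert, coe_singleton, Set.insert_subset_iff, Set.singleton_subset_iff,
      mem_coe] at ht
    exact htri ⟨x, ht.1, y, ht.2.1, z, ht.2.2, hxy, hyz, hxz⟩
  obtain rfl | ⟨v, hv⟩ := N.eq_empty_or_nonempty
  · exact ⟨∅, ∅, .empty, by simp, by simp, by simp⟩
  by_contra hno
  have key : ∀ n : ℕ, ∃ v ∈ N, ∃ V C, IsStablePacking G (N.erase v) V C ∧
      n ≤ (C.filter fun c => ∃ x ∈ N.erase v, x ∉ V ∧ G.Adj c x).card := by
    intro n
    induction n with
    | zero =>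
      obtain ⟨V, C, h⟩ := ih _ (erase_ssubset hv)
      exact ⟨v, hv, V, C, h, Nat.zero_le _⟩
    | succ n ihn =>
      obtain ⟨v, hv, V, C, h, hn⟩ := ihn
      obtain h' | ⟨w, hw, V', C', h', hlt⟩ := h.exists_repair_or_augment hv htri
      · exact (hno h').elim
      · exact ⟨w, hw, V', C', h', by omega⟩
  obtain ⟨v, hv, V, C, h, hn⟩ := key (N.card + 1)
  have h₁ := card_le_card (filter_subset (fun c => ∃ x ∈ N.erase v, x ∉ V ∧ G.Adj c x) C)
  have h₂ := card_le_card ((h.packing.subset.trans h.subset).trans (erase_subset v N))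
  omega

/-- The graph on `N` whose edges are the pairs of distinct agents valuing each other at `1`. -/
def acceptGraph {N : Finset A} {val : A → A → ℤ} [DecidableEq A] (hbs : BinSym N val) :
    SimpleGraph A where
  Adj a b := a ∈ N ∧ b ∈ N ∧ a ≠ b ∧ val a b = 1
  symm := ⟨fun a b h => ⟨h.2.1, h.1, h.2.2.1.symm, hbs.2 a h.1 b h.2.1 ▸ h.2.2.2⟩⟩
  loopless := ⟨fun _ h => h.2.2.1 rfl⟩

section

variable [DecidableEq A] {N : Finset A} {val : A → A → ℤ}

lemma utility_insert_of_mem {M : Finset (Finset A)} {t : Finset A} {a : A} (ha : a ∈ t)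
    (hM : ∀ s ∈ M, a ∉ s) : utility val (insert t M) a = ∑ b ∈ t.erase a, val a b := by
  have : (insert t M).filter (fun s => a ∈ s) = {t} := by grind
  rw [utility, this, sum_singleton]

lemma utility_insert_of_notMem {M : Finset (Finset A)} {t : Finset A} {a : A} (ha : a ∉ t) :
    utility val (insert t M) a = utility val M a := by
  rw [utility, utility, filter_insert, if_neg ha]

lemma sum_erase_triple {x y z : A} (hxy : x ≠ y) (hxz : x ≠ z) (hyz : y ≠ z) (f : A → ℤ) :
    ∑ b ∈ ({x, y, z} : Finset A).erase x, f b = f y + f z := by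
  rw [show ({x, y, z} : Finset A).erase x = {y, z} by grind, sum_pair hyz]

lemma IsMatching.insert {V : Finset A} {M : Finset (Finset A)} {t : Finset A}
    (hM : IsMatching V M) (ht : t.card = 3) (htV : Disjoint t V) :
    IsMatching (t ∪ V) (insert t M) := by
  have hdisj : ∀ s ∈ M, Disjoint t s := fun s hs => htV.mono_right (hM.1 s hs).2
  refine ⟨fun s hs => ?_, fun s hs r hr hsr => ?_⟩
  · obtain rfl | hs := mem_insert.1 hs
    · exact ⟨ht, subset_union_left⟩
    · exact ⟨(hM.1 s hs).1, (hM.1 s hs).2.trans subset_union_right⟩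
  · obtain rfl | hs' := mem_insert.1 hs <;> obtain rfl | hr' := mem_insert.1 hr
    · exact (hsr rfl).elim
    · exact hdisj r hr'
    · exact (hdisj s hs').symm
    · exact hM.2 s hs' r hr' hsr

lemma PathTrianglePacking.exists_isMatching (hbs : BinSym N val) {V C : Finset A}
    (h : PathTrianglePacking (acceptGraph hbs) V C) :
    ∃ M, IsMatching V M ∧ (∀ a ∈ C, 2 ≤ utility val M a) ∧ ∀ a ∈ V, 1 ≤ utility val M a := by
  have hutil : ∀ {V : Finset A} {M : Finset (Finset A)} {a c b : A}, IsMatching V M → a ∉ V →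
      a ≠ c → a ≠ b → c ≠ b → ∀ t : Finset A, t = {a, c, b} →
      utility val (insert t M) a = val a c + val a b := by
    rintro V M a c b hM ha hac hab hcb t rfl
    rw [utility_insert_of_mem (by simp) fun s hs has => ha ((hM.1 s hs).2 has),
      sum_erase_triple hac hab hcb]
  induction h with
  | empty => exact ⟨∅, ⟨by simp, by simp⟩, by simp, by simp⟩
  | @path V C a c b h hca hcb hab ha hc hb ih =>
    obtain ⟨M, hM, hMC, hMV⟩ := ih
    have hCV := h.subset
    have hac := hca.symm
    have hbc := hcb.symm
    have hab' := hbs.1 a hca.2.1 b hcb.2.1 hab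
    have hba' := hbs.1 b hcb.2.1 a hca.2.1 hab.symm
    have ua := hutil hM ha hac.ne hab hcb.ne {a, c, b} rfl
    have ub := hutil hM hb hab.symm hbc.ne hac.ne {a, c, b} (by ext; simp; tauto)
    have uc := hutil hM hc hca.ne hcb.ne hab {a, c, b} (by ext; simp; tauto)
    rw [hac.2.2.2] at ua
    rw [hbc.2.2.2] at ub
    rw [hca.2.2.2, hcb.2.2.2] at uc
    have hrest : ∀ d ∈ V, utility val (insert {a, c, b} M) d = utility val M d :=
      fun d hd => utility_insert_of_notMem (by grind)
    refine ⟨insert {a, c, b} M, hM.insert (card_eq_three.2 ⟨a, c, b, hac.ne, hab, hcb.ne, rfl⟩)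
      (by simp [ha, hb, hc]), fun d hd => ?_, fun d hd => ?_⟩
    · obtain rfl | hd := mem_insert.1 hd
      · omega
      · rw [hrest d (hCV hd)]
        exact hMC d hd
    · simp only [mem_union, mem_insert, mem_singleton] at hd
      obtain (rfl | rfl | rfl) | hd := hd
      · omega
      · omega
      · omega
      · rw [hrest d hd]
        exact hMV d hd
  | @triangle V C a c b h hca hcb hab ha hc hb ih =>
    obtain ⟨M, hM, hMC, hMV⟩ := ih
    have hCV := h.subset
    have hac := hca.symm
    have hbc := hcb.symm
    have hba := hab.symm
    have ua := hutil hM ha hac.ne hab.ne hcb.ne {a, c, b} rfl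
    have ub := hutil hM hb hba.ne hbc.ne hac.ne {a, c, b} (by ext; simp; tauto)
    have uc := hutil hM hc hca.ne hcb.ne hab.ne {a, c, b} (by ext; simp; tauto)
    rw [hac.2.2.2, hab.2.2.2] at ua
    rw [hbc.2.2.2, hba.2.2.2] at ub
    rw [hca.2.2.2, hcb.2.2.2] at uc
    have hrest : ∀ d ∈ V, utility val (insert {a, c, b} M) d = utility val M d :=
      fun d hd => utility_insert_of_notMem (by grind)
    have htwo : ∀ d ∈ ({a, c, b} : Finset A), 2 ≤ utility val (insert {a, c, b} M) d := by
      intro d hd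
      simp only [mem_insert, mem_singleton] at hd
      obtain rfl | rfl | rfl := hd <;> omega
    refine ⟨insert {a, c, b} M,
      hM.insert (card_eq_three.2 ⟨a, c, b, hac.ne, hab.ne, hcb.ne, rfl⟩)
      (by simp [ha, hb, hc]), fun d hd => ?_, fun d hd => ?_⟩
    · obtain hd | hd := mem_union.1 hd
      · exact htwo d hd
      · rw [hrest d (hCV hd)]
        exact hMC d hd
    · obtain hd | hd := mem_union.1 hd
      · exact one_le_two.trans (htwo d hd)
      · rw [hrest d hd]
        exact hMV d hd

lemma IsMatching.utility_nonneg (hbs : BinSym N val) {M : Finset (Finset A)}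
    (hM : IsMatching N M) (a : A) : 0 ≤ utility val M a := by
  refine sum_nonneg fun t ht => sum_nonneg fun b hb => ?_
  rw [mem_filter] at ht
  rw [mem_erase] at hb
  have hsub := (hM.1 t ht.1).2
  have := hbs.1 a (hsub ht.2) b (hsub hb.2) hb.1.symm
  omega

/-- Every binary symmetric instance has a stable matching. -/
lemma exists_isMatching_isStable (hbs : BinSym N val) :
    ∃ M, IsMatching N M ∧ IsStable N val M := by
  obtain ⟨V, C, hP, hVN, hpath, htri⟩ := exists_isStablePacking (acceptGraph hbs) N
  obtain ⟨M, hM, hMC, hMV⟩ := hP.exists_isMatching hbs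
  have hMN : IsMatching N M := ⟨fun t ht => ⟨(hM.1 t ht).1, (hM.1 t ht).2.trans hVN⟩, hM.2⟩
  refine ⟨M, hMN, ?_⟩
  rintro x y z ⟨hx, hy, hz, hxy, hxz, hyz, bx, bY, bz⟩
  have nx := hMN.utility_nonneg hbs x
  have ny := hMN.utility_nonneg hbs y
  have nz := hMN.utility_nonneg hbs z
  have sxy := hbs.2 x hx y hy
  have sxz := hbs.2 x hx z hz
  have syz := hbs.2 y hy z hz
  have vxy := hbs.1 x hx y hy hxy
  have vxz := hbs.1 x hx z hz hxz
  have vyz := hbs.1 y hy z hz hyz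
  have cx : x ∉ C := fun h => by have := hMC x h; omega
  have cy : y ∉ C := fun h => by have := hMC y h; omega
  have cz : z ∉ C := fun h => by have := hMC z h; omega
  by_cases exy : val x y = 1
  swap
  · exact hxy (hpath z hz cz x hx (fun h => by have := hMV x h; omega) y hy
      (fun h => by have := hMV y h; omega) ⟨hz, hx, hxz.symm, by omega⟩
      ⟨hz, hy, hyz.symm, by omega⟩)
  by_cases exz : val x z = 1
  swap
  · exact hxz (hpath y hy cy x hx (fun h => by have := hMV x h; omega) z hz
      (fun h => by have := hMV z h; omega) ⟨hy, hx, hxy.symm, by omega⟩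
      ⟨hy, hz, hyz, by omega⟩)
  by_cases eyz : val y z = 1
  swap
  · exact hyz (hpath x hx cx y hy (fun h => by have := hMV y h; omega) z hz
      (fun h => by have := hMV z h; omega) ⟨hx, hy, hxy, exy⟩ ⟨hx, hz, hxz, exz⟩)
  exact htri x hx cx y hy cy z hz cz ⟨hx, hy, hxy, exy⟩ ⟨hy, hz, hyz, eyz⟩ ⟨hx, hz, hxz, exz⟩

end

/-- Every binary symmetric instance contains a stable matching whose utilitarian welfare
is at least half of the maximum utilitarian welfare taken over all stable matchings. -/
theorem exists_stable_matching_half_max_welfare [DecidableEq A]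
    (N : Finset A) (val : A → A → ℤ) (hbs : BinSym N val) :
    ∃ M, IsMatching N M ∧ IsStable N val M ∧
      ∀ M', IsMatching N M' → IsStable N val M' →
        ∑ a ∈ N, utility val M' a ≤ 2 * ∑ a ∈ N, utility val M a := by
  classical
  obtain ⟨M₀, hM₀, hS₀⟩ := exists_isMatching_isStable hbs
  obtain ⟨M, hM, hmax⟩ := (N.powerset.powerset.filter
    fun M => IsMatching N M ∧ IsStable N val M).exists_max_image
      (fun M => ∑ a ∈ N, utility val M a) ⟨M₀, by
        simp only [mem_filter, mem_powerset]
        exact ⟨fun t ht => mem_powerset.2 (hM₀.1 t ht).2, hM₀, hS₀⟩⟩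
  obtain ⟨-, hMm, hMs⟩ := mem_filter.1 hM
  refine ⟨M, hMm, hMs, fun M' hM' hS' => ?_⟩
  have hle := hmax M' (mem_filter.2
    ⟨mem_powerset.2 fun t ht => mem_powerset.2 (hM'.1 t ht).2, hM', hS'⟩)
  have hnn : 0 ≤ ∑ a ∈ N, utility val M a := sum_nonneg fun a _ => hMm.utility_nonneg hbs a
  linarith
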